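/- Fix constants 0 < q < p < 1. There exists L > 0 such that for all integers n ≥ 2 and all integers Δ ≥ 0, one has P[Bin(n+Δ, q) > Bin(n−2, p)] ≤ L·P[Bin(n+Δ, q) > Bin(n−1, p)], where within each probability the two binomial random variables are independent. -/

import Mathlib

open Finset

/-- Probability mass function of the binomial distribution `Bin(m, r)`. -/
noncomputable def binomPMF (m : ℕ) (r : ℝ) (k : ℕ) : ℝ :=
  (m.choose k : ℝ) * r ^ k * (1 - r) ^ (m - k)

/-- `P[X ∈ P]` for `X ~ Bin(m, r)`. -/
noncomputable def binomProb (m : ℕ) (r : ℝ) (P : ℕ → Prop) : ℝ :=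
  ∑ k ∈ Finset.range (m + 1), Set.indicator {k | P k} (binomPMF m r) k

/-- `P[(X, Y) ∈ P]` for independent `X ~ Bin(m₁, r₁)` and `Y ~ Bin(m₂, r₂)`. -/
noncomputable def binomProb2 (m₁ : ℕ) (r₁ : ℝ) (m₂ : ℕ) (r₂ : ℝ) (P : ℕ → ℕ → Prop) : ℝ :=
  ∑ j ∈ Finset.range (m₁ + 1), ∑ k ∈ Finset.range (m₂ + 1),
    Set.indicator {jk : ℕ × ℕ | P jk.1 jk.2}
      (fun jk => binomPMF m₁ r₁ jk.1 * binomPMF m₂ r₂ jk.2) (j, k)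

/-! The constant `L = 1 / (1 - p)` works. A `Bin(m + 1, p)` variable is a `Bin(m, p)` variable plus
an independent Bernoulli trial, and with probability `1 - p` that trial fails, in which case the two
agree. At the level of mass functions this reads
`(1 - p) * binomPMF m p k ≤ binomPMF (m + 1) p k` for `k ≤ m` (`binomPMF_le_succ`), and summing
over the event `{d < t}` gives the claim. -/

theorem binomPMF_nonneg (m : ℕ) {r : ℝ} (h0 : 0 ≤ r) (h1 : r ≤ 1) (k : ℕ) :
    0 ≤ binomPMF m r k := by
  have : 0 ≤ 1 - r := sub_nonneg.2 h1
  unfold binomPMF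
  positivity

theorem binomPMF_le_succ (m : ℕ) {r : ℝ} (h0 : 0 ≤ r) (h1 : r ≤ 1) {k : ℕ} (hk : k ≤ m) :
    (1 - r) * binomPMF m r k ≤ binomPMF (m + 1) r k := by
  have h : 0 ≤ 1 - r := sub_nonneg.2 h1
  have hc : (m.choose k : ℝ) ≤ ((m + 1).choose k : ℝ) := by
    exact_mod_cast Nat.choose_le_choose k (Nat.le_succ m)
  unfold binomPMF
  rw [Nat.succ_sub hk, pow_succ]
  calc (1 - r) * ((m.choose k : ℝ) * r ^ k * (1 - r) ^ (m - k))
      = (m.choose k : ℝ) * r ^ k * ((1 - r) ^ (m - k) * (1 - r)) := by ring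
    _ ≤ _ := by gcongr

/-- Adding one trial to the second binomial variable costs at most a factor `1 - r₂` in the
probability of any event, whatever its shape. -/
theorem binomProb2_le_succ (m₁ m₂ : ℕ) {r₁ r₂ : ℝ} (h₁ : 0 ≤ r₁) (h₁' : r₁ ≤ 1)
    (h₂ : 0 ≤ r₂) (h₂' : r₂ ≤ 1) (P : ℕ → ℕ → Prop) :
    (1 - r₂) * binomProb2 m₁ r₁ m₂ r₂ P ≤ binomProb2 m₁ r₁ (m₂ + 1) r₂ P := by
  classical
  unfold binomProb2
  rw [Finset.mul_sum]
  refine Finset.sum_le_sum fun j _ => ?_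
  rw [Finset.mul_sum, Finset.sum_range_succ _ (m₂ + 1)]
  refine le_add_of_le_of_nonneg (Finset.sum_le_sum fun k hk => ?_) ?_
  · have hk' : k ≤ m₂ := Nat.lt_succ_iff.1 (Finset.mem_range.1 hk)
    simp only [Set.indicator_apply]
    split_ifs
    · rw [mul_left_comm]
      exact mul_le_mul_of_nonneg_left (binomPMF_le_succ m₂ h₂ h₂' hk')
        (binomPMF_nonneg m₁ h₁ h₁' j)
    · simp
  · exact Set.indicator_nonneg (fun jk _ => mul_nonneg (binomPMF_nonneg m₁ h₁ h₁' jk.1)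
      (binomPMF_nonneg (m₂ + 1) h₂ h₂' jk.2)) _

/-- the comparison step in the proof of Lemma 3.6.
Fix constants `0 < q < p < 1`.  There exists `L > 0` such that for all integers `n ≥ 2` and all
integers `Δ ≥ 0`, one has
`P[Bin(n+Δ, q) > Bin(n−2, p)] ≤ L·P[Bin(n+Δ, q) > Bin(n−1, p)]`,
where within each probability the two binomial random variables are independent. -/
theorem binomial_tail_one_fewer_trial_comparison
    (p q : ℝ) (hq : 0 < q) (hqp : q < p) (hp : p < 1) :
    ∃ L : ℝ, 0 < L ∧ ∀ n : ℕ, 2 ≤ n → ∀ Δ : ℕ,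
      binomProb2 (n + Δ) q (n - 2) p (fun t d => d < t)
        ≤ L * binomProb2 (n + Δ) q (n - 1) p (fun t d => d < t) := by
  have h : 0 < 1 - p := sub_pos.2 hp
  refine ⟨(1 - p)⁻¹, inv_pos.2 h, fun n hn Δ => ?_⟩
  obtain ⟨m, rfl⟩ := Nat.exists_eq_add_of_le' hn
  rw [← div_eq_inv_mul, le_div_iff₀' h]
  exact binomProb2_le_succ (m + 2 + Δ) m hq.le (hqp.trans hp).le (hq.trans hqp).le hp.le _
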